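/- arXiv:2408.13793 — 2 statements merged into one kernel-verified Lean document; each statement's English description precedes it below -/
import Mathlib

section
/- Let k > 0, let z ∈ ℝ³ be fixed and let p ∈ ℂ³ be a constant vector. Then the vector field u(x) := Π_k(x,z) · p satisfies the homogeneous time-harmonic Maxwell system curl curl u(x) − k² u(x) = 0 for every x ∈ ℝ³ ∖ {z}. -/
/-!
Away from `z` the kernel `Φ = Φ_k(·, z)` is smooth, so partial derivatives commute, and
`u = k⁻² ∇(p · ∇Φ) + Φ p`. The gradient part has zero curl, hence `curl u = ∇Φ × p`
(`curl_PiK_mulVec`), and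
`curl (∇Φ × p) = Hess Φ · p − (ΔΦ) p`. The Helmholtz equation `ΔΦ = −k² Φ` (`helmholtz_PhiK`)
turns the right-hand side into `Hess Φ · p + k² Φ p = k² u`.

The Helmholtz equation is checked radially: with `r = ‖x − z‖` and `Φ = F(r)`, the gradient is
`∂ᵢΦ = (xᵢ − zᵢ) G(r)` where `G = F' / r`, so that `ΔΦ = 3 G + r G'`.
-/

open Matrix

/-- The fundamental solution of the Helmholtz equation in `ℝ³`:
`Φ_k(x,y) = e^{i k |x−y|} / (4π |x−y|)`. -/
noncomputable def PhiK (k : ℝ) (x y : EuclideanSpace ℝ (Fin 3)) : ℂ :=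
  Complex.exp (Complex.I * (k : ℂ) * (‖x - y‖ : ℝ)) / ((4 * Real.pi * ‖x - y‖ : ℝ) : ℂ)

/-- The Hessian matrix (in the `x` variable) of `Φ_k(·,y)` at `x`. -/
noncomputable def hessPhiK (k : ℝ) (x y : EuclideanSpace ℝ (Fin 3)) (i j : Fin 3) : ℂ :=
  fderiv ℝ (fun x' => fderiv ℝ (fun x'' => PhiK k x'' y) x' (EuclideanSpace.single j 1)) x
    (EuclideanSpace.single i 1)

/-- The homogeneous Maxwell (dyadic) Green kernel
`Π_k(x,y) = (1/k²) Hess_x Φ_k(x,y) + Φ_k(x,y) I₃`. -/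
noncomputable def PiK (k : ℝ) (x y : EuclideanSpace ℝ (Fin 3)) : Matrix (Fin 3) (Fin 3) ℂ :=
  Matrix.of fun i j =>
    (1 / (k : ℂ) ^ 2) * hessPhiK k x y i j + PhiK k x y * (if i = j then 1 else 0)

/-- Partial derivative in the `i`-th coordinate direction. -/
noncomputable def pd (i : Fin 3) (f : EuclideanSpace ℝ (Fin 3) → ℂ)
    (x : EuclideanSpace ℝ (Fin 3)) : ℂ :=
  fderiv ℝ f x (EuclideanSpace.single i 1)

/-- Curl of a vector field `u : ℝ³ → ℂ³`:
`curl u := (∂₂u₃ − ∂₃u₂, ∂₃u₁ − ∂₁u₃, ∂₁u₂ − ∂₂u₁)`. -/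
noncomputable def curl (u : EuclideanSpace ℝ (Fin 3) → Fin 3 → ℂ)
    (x : EuclideanSpace ℝ (Fin 3)) : Fin 3 → ℂ :=
  ![pd 1 (fun x' => u x' 2) x - pd 2 (fun x' => u x' 1) x,
    pd 2 (fun x' => u x' 0) x - pd 0 (fun x' => u x' 2) x,
    pd 0 (fun x' => u x' 1) x - pd 1 (fun x' => u x' 0) x]

open scoped ContDiff

section PartialDerivatives

variable {f g : EuclideanSpace ℝ (Fin 3) → ℂ} {x : EuclideanSpace ℝ (Fin 3)}

theorem contDiffAt_pd (i : Fin 3) (hf : ContDiffAt ℝ ∞ f x) : ContDiffAt ℝ ∞ (pd i f) x := by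
  have h : ContDiffAt ℝ ∞ (fderiv ℝ f) x := hf.fderiv_right (by simp)
  exact h.clm_apply contDiffAt_const

theorem pd_comm (i j : Fin 3) (hf : ContDiffAt ℝ ∞ f x) :
    pd i (pd j f) x = pd j (pd i f) x := by
  have h : DifferentiableAt ℝ (fderiv ℝ f) x :=
    (hf.fderiv_right (m := ∞) (by simp)).differentiableAt (by simp)
  have hs : IsSymmSndFDerivAt ℝ f x := hf.isSymmSndFDerivAt (by simpa using WithTop.coe_le_coe.2 (le_top : (2 : ℕ∞) ≤ ⊤))
  have key : ∀ a b : Fin 3, pd a (pd b f) x =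
      fderiv ℝ (fderiv ℝ f) x (EuclideanSpace.single a 1) (EuclideanSpace.single b 1) := by
    intro a b
    change fderiv ℝ (fun y => fderiv ℝ f y (EuclideanSpace.single b 1)) x _ = _
    rw [fderiv_clm_apply h (differentiableAt_const _)]
    simp
  rw [key, key]
  exact hs.eq _ _

theorem pd_add (i : Fin 3) (hf : ContDiffAt ℝ ∞ f x) (hg : ContDiffAt ℝ ∞ g x) :
    pd i (fun y => f y + g y) x = pd i f x + pd i g x := by
  have := fderiv_fun_add (hf.differentiableAt (by simp)) (hg.differentiableAt (by simp))
  simp [pd, this]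

theorem pd_sub (i : Fin 3) (hf : ContDiffAt ℝ ∞ f x) (hg : ContDiffAt ℝ ∞ g x) :
    pd i (fun y => f y - g y) x = pd i f x - pd i g x := by
  have := fderiv_fun_sub (hf.differentiableAt (by simp)) (hg.differentiableAt (by simp))
  simp [pd, this]

theorem pd_mul_const (i : Fin 3) (c : ℂ) (hf : ContDiffAt ℝ ∞ f x) :
    pd i (fun y => f y * c) x = pd i f x * c := by
  have := fderiv_mul_const (hf.differentiableAt (by simp)) c
  rw [pd, this]
  simp [pd, mul_comm]

theorem pd_congr (i : Fin 3) {z : EuclideanSpace ℝ (Fin 3)} (hx : x ≠ z)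
    (h : ∀ y, y ≠ z → f y = g y) : pd i f x = pd i g x := by
  have : f =ᶠ[nhds x] g := by
    filter_upwards [isOpen_ne.mem_nhds hx] with y hy using h y hy
  simp only [pd, this.fderiv_eq]

/-- Chain rule for a radial function `x ↦ F ‖x - z‖` away from its centre. -/
theorem pd_radial (i : Fin 3) {z : EuclideanSpace ℝ (Fin 3)} (hx : x ≠ z) {F : ℝ → ℂ} {F' : ℂ}
    (hF : HasDerivAt F F' ‖x - z‖) :
    pd i (fun y => F ‖y - z‖) x = ((x i - z i : ℝ) : ℂ) * (F' / (‖x - z‖ : ℝ)) := by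
  have hne : x - z ≠ 0 := sub_ne_zero.mpr hx
  have hpos : 0 < ‖x - z‖ := norm_pos_iff.mpr hne
  have h1 : HasFDerivAt (fun y : EuclideanSpace ℝ (Fin 3) => ‖y - z‖)
      (‖x - z‖⁻¹ • innerSL ℝ (x - z)) x := by
    have hsq : HasFDerivAt (fun y : EuclideanSpace ℝ (Fin 3) => ‖y - z‖ ^ 2)
        (2 • innerSL ℝ (x - z)) x := by
      simpa using ((hasFDerivAt_id x).sub_const z).norm_sq
    have := hsq.sqrt (by positivity)
    simp only [Real.sqrt_sq (norm_nonneg _)] at this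
    refine this.congr_fderiv ?_
    ext v
    simp
    field_simp
  have h2 := hF.hasFDerivAt.comp x h1
  have h3 : HasFDerivAt (fun y : EuclideanSpace ℝ (Fin 3) => F ‖y - z‖) _ x := h2
  rw [pd, h3.fderiv]
  simp [EuclideanSpace.inner_single_right]
  ring

theorem pd_coord_mul (i j : Fin 3) (z : EuclideanSpace ℝ (Fin 3)) (hf : ContDiffAt ℝ ∞ f x) :
    pd i (fun y => ((y j - z j : ℝ) : ℂ) * f y) x =
      (if i = j then 1 else 0) * f x + ((x j - z j : ℝ) : ℂ) * pd i f x := by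
  have hc : HasFDerivAt (fun y : EuclideanSpace ℝ (Fin 3) => ((y j - z j : ℝ) : ℂ))
      (Complex.ofRealCLM.comp (EuclideanSpace.proj (𝕜 := ℝ) j)) x :=
    Complex.ofRealCLM.hasFDerivAt.comp x
      ((EuclideanSpace.proj (𝕜 := ℝ) j).hasFDerivAt.sub_const (z j))
  have h := hc.mul (hf.differentiableAt (by simp)).hasFDerivAt
  have h' : HasFDerivAt (fun y => ((y j - z j : ℝ) : ℂ) * f y) _ x := h
  rw [pd, h'.fderiv]
  by_cases hij : i = j
  · subst hij
    simp [pd]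
    ring
  · simp [pd, hij, Ne.symm hij]

end PartialDerivatives

section Helmholtz

/-- The radial profile `F` of the fundamental solution: `Φ_k(x, z) = F ‖x - z‖`. -/
noncomputable def radF (k r : ℝ) : ℂ :=
  Complex.exp (Complex.I * (k : ℂ) * (r : ℝ)) / ((4 * Real.pi * r : ℝ) : ℂ)

/-- The profile `G = F' / r` of the gradient: `∂ᵢ Φ_k(x, z) = (xᵢ - zᵢ) G ‖x - z‖`. -/
noncomputable def radG (k r : ℝ) : ℂ :=
  radF k r * (Complex.I * k / r - 1 / (r : ℂ) ^ 2)

variable (k : ℝ) {r : ℝ}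

theorem hasDerivAt_radF (hr : 0 < r) :
    HasDerivAt (radF k) (radF k r * (Complex.I * k - 1 / r)) r := by
  have hid : HasDerivAt (fun s : ℝ => (s : ℂ)) 1 r := Complex.ofRealCLM.hasDerivAt
  have hrc : (r : ℂ) ≠ 0 := by exact_mod_cast hr.ne'
  have hpi : (Real.pi : ℂ) ≠ 0 := by exact_mod_cast Real.pi_ne_zero
  have h := ((hid.const_mul (Complex.I * k)).cexp).div (hid.const_mul (4 * Real.pi : ℂ))
    (by simp [hrc, hpi])
  refine (h.congr_of_eventuallyEq (Filter.Eventually.of_forall fun s => ?_)).congr_deriv ?_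
  · simp [radF]
  · simp only [radF]
    push_cast
    field_simp

theorem hasDerivAt_radG (hr : 0 < r) :
    HasDerivAt (radG k) (radF k r * ((Complex.I * k - 1 / r) * (Complex.I * k / r - 1 / (r : ℂ) ^ 2)
      - Complex.I * k / (r : ℂ) ^ 2 + 2 / (r : ℂ) ^ 3)) r := by
  have hid : HasDerivAt (fun s : ℝ => (s : ℂ)) 1 r := Complex.ofRealCLM.hasDerivAt
  have hrc : (r : ℂ) ≠ 0 := by exact_mod_cast hr.ne'
  have h := (hasDerivAt_radF k hr).mul
    (((hasDerivAt_const r (Complex.I * k)).div hid hrc).sub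
      ((hasDerivAt_const r (1 : ℂ)).div (hid.pow 2) (pow_ne_zero 2 hrc)))
  refine HasDerivAt.congr_deriv (f := radG k) h ?_
  simp
  field_simp
  ring

variable {x z : EuclideanSpace ℝ (Fin 3)}

theorem contDiffAt_PhiK (hx : x ≠ z) : ContDiffAt ℝ ∞ (fun y => PhiK k y z) x := by
  have hne : x - z ≠ 0 := sub_ne_zero.mpr hx
  have hn : ContDiffAt ℝ ∞ (fun y : EuclideanSpace ℝ (Fin 3) => ‖y - z‖) x :=
    (contDiffAt_id.sub contDiffAt_const).norm ℝ hne
  have hc : ContDiffAt ℝ ∞ (fun y : EuclideanSpace ℝ (Fin 3) => ((‖y - z‖ : ℝ) : ℂ)) x :=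
    Complex.ofRealCLM.contDiff.contDiffAt.comp x hn
  have hd : ContDiffAt ℝ ∞
      (fun y : EuclideanSpace ℝ (Fin 3) => ((4 * Real.pi * ‖y - z‖ : ℝ) : ℂ)) x :=
    Complex.ofRealCLM.contDiff.contDiffAt.comp x (contDiffAt_const.mul hn)
  refine (contDiffAt_const.mul hc).cexp.mul (hd.inv ?_)
  simp [hne, Real.pi_ne_zero]

theorem contDiffAt_radG_norm (hx : x ≠ z) : ContDiffAt ℝ ∞ (fun y => radG k ‖y - z‖) x := by
  have hne : x - z ≠ 0 := sub_ne_zero.mpr hx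
  have hn : ContDiffAt ℝ ∞ (fun y : EuclideanSpace ℝ (Fin 3) => ‖y - z‖) x :=
    (contDiffAt_id.sub contDiffAt_const).norm ℝ hne
  have hc : ContDiffAt ℝ ∞ (fun y : EuclideanSpace ℝ (Fin 3) => ((‖y - z‖ : ℝ) : ℂ)) x :=
    Complex.ofRealCLM.contDiff.contDiffAt.comp x hn
  have hrc : ((‖x - z‖ : ℝ) : ℂ) ≠ 0 := by simpa using hne
  exact (contDiffAt_PhiK k hx).mul
    ((contDiffAt_const.mul (hc.inv hrc)).sub
      (contDiffAt_const.mul ((hc.pow 2).inv (pow_ne_zero 2 hrc))))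

theorem pd_PhiK (i : Fin 3) (hx : x ≠ z) :
    pd i (fun y => PhiK k y z) x = ((x i - z i : ℝ) : ℂ) * radG k ‖x - z‖ := by
  have hpos : 0 < ‖x - z‖ := norm_pos_iff.mpr (sub_ne_zero.mpr hx)
  have hrc : ((‖x - z‖ : ℝ) : ℂ) ≠ 0 := by exact_mod_cast hpos.ne'
  refine (pd_radial i hx (hasDerivAt_radF k hpos)).trans ?_
  congr 1
  rw [radG]
  field_simp

/-- The Helmholtz equation `ΔΦ_k(·, z) = -k² Φ_k(·, z)` away from `z`. -/
theorem helmholtz_PhiK (hx : x ≠ z) :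
    pd 0 (pd 0 fun y => PhiK k y z) x + pd 1 (pd 1 fun y => PhiK k y z) x
      + pd 2 (pd 2 fun y => PhiK k y z) x = -(k : ℂ) ^ 2 * PhiK k x z := by
  have hpos : 0 < ‖x - z‖ := norm_pos_iff.mpr (sub_ne_zero.mpr hx)
  have hrc : ((‖x - z‖ : ℝ) : ℂ) ≠ 0 := by exact_mod_cast hpos.ne'
  have hG := hasDerivAt_radG k hpos
  have key : ∀ i : Fin 3, pd i (pd i fun y => PhiK k y z) x = _ := fun i => by
    rw [pd_congr i hx fun y hy => pd_PhiK k i hy, pd_coord_mul i i z (contDiffAt_radG_norm k hx),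
      pd_radial i hx hG]
  have hsum : (((‖x - z‖ : ℝ) : ℂ)) ^ 2 = ((x 0 - z 0 : ℝ) : ℂ) ^ 2 + ((x 1 - z 1 : ℝ) : ℂ) ^ 2
      + ((x 2 - z 2 : ℝ) : ℂ) ^ 2 := by
    have := EuclideanSpace.real_norm_sq_eq (x - z)
    rw [Fin.sum_univ_three] at this
    exact_mod_cast this
  have hPhi : PhiK k x z = radF k ‖x - z‖ := rfl
  rw [key, key, key, hPhi, radG]
  generalize radF k ‖x - z‖ = F
  generalize ((‖x - z‖ : ℝ) : ℂ) = R at *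
  simp only [if_true]
  set D := F * ((Complex.I * k - 1 / R) * (Complex.I * k / R - 1 / R ^ 2)
      - Complex.I * k / R ^ 2 + 2 / R ^ 3) with hD
  trans 3 * (F * (Complex.I * k / R - 1 / R ^ 2)) + R ^ 2 * (D / R)
  · rw [hsum]
    ring
  · rw [hD]
    field_simp
    linear_combination F * k ^ 2 * R ^ 2 * Complex.I_sq

end Helmholtz

theorem PiK_mulVec_apply (k : ℝ) (z y : EuclideanSpace ℝ (Fin 3)) (p : Fin 3 → ℂ) (i : Fin 3) :
    (PiK k y z).mulVec p i =
      pd i (pd 0 fun y => PhiK k y z) y * (p 0 / (k : ℂ) ^ 2)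
      + pd i (pd 1 fun y => PhiK k y z) y * (p 1 / (k : ℂ) ^ 2)
      + pd i (pd 2 fun y => PhiK k y z) y * (p 2 / (k : ℂ) ^ 2) + PhiK k y z * p i := by
  have h : ∀ j, PiK k y z i j = (1 / (k : ℂ) ^ 2) * pd i (pd j fun y => PhiK k y z) y
      + PhiK k y z * (if i = j then 1 else 0) := fun j => rfl
  simp only [Matrix.mulVec, dotProduct, Fin.sum_univ_three, h]
  fin_cases i <;> simp <;> ring

/-- In `∂ₐ u_b - ∂_b uₐ` the contributions of `k⁻² ∇(p · ∇Φ)` cancel, because third partial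
derivatives of `Φ` commute. -/
theorem curl_PiK_mulVec (k : ℝ) {z y : EuclideanSpace ℝ (Fin 3)} (p : Fin 3 → ℂ) (a b : Fin 3)
    (hy : y ≠ z) :
    pd a (fun y => (PiK k y z).mulVec p b) y - pd b (fun y => (PiK k y z).mulVec p a) y =
      pd a (fun y => PhiK k y z) y * p b - pd b (fun y => PhiK k y z) y * p a := by
  have hP := contDiffAt_PhiK k hy
  have h1 := fun j => contDiffAt_pd j hP
  have h2 := fun i j => contDiffAt_pd i (h1 j)
  have hm : ∀ i j (c : ℂ), ContDiffAt ℝ ∞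
      (fun y => pd i (pd j fun y => PhiK k y z) y * c) y :=
    fun i j c => (h2 i j).mul contDiffAt_const
  have key : ∀ a b, pd a (fun y => (PiK k y z).mulVec p b) y =
      pd a (pd b (pd 0 fun y => PhiK k y z)) y * (p 0 / (k : ℂ) ^ 2)
      + pd a (pd b (pd 1 fun y => PhiK k y z)) y * (p 1 / (k : ℂ) ^ 2)
      + pd a (pd b (pd 2 fun y => PhiK k y z)) y * (p 2 / (k : ℂ) ^ 2)
      + pd a (fun y => PhiK k y z) y * p b := fun a b => by
    simp only [PiK_mulVec_apply]
    rw [pd_add a (((hm b 0 _).add (hm b 1 _)).add (hm b 2 _)) (hP.mul contDiffAt_const),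
      pd_add a ((hm b 0 _).add (hm b 1 _)) (hm b 2 _), pd_add a (hm b 0 _) (hm b 1 _),
      pd_mul_const a _ (h2 b 0), pd_mul_const a _ (h2 b 1), pd_mul_const a _ (h2 b 2),
      pd_mul_const a _ hP]
  rw [key, key, pd_comm a b (h1 0), pd_comm a b (h1 1), pd_comm a b (h1 2)]
  ring

/-- For a fixed `z` and a constant vector `p ∈ ℂ³`, the field `u(x) := Π_k(x,z)·p`
satisfies `curl curl u − k² u = 0` on `ℝ³ ∖ {z}`. -/
theorem stmt12 (k : ℝ) (hk : 0 < k) (z : EuclideanSpace ℝ (Fin 3)) (p : Fin 3 → ℂ) :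
    ∀ x : EuclideanSpace ℝ (Fin 3), x ≠ z →
      curl (curl (fun x' => (PiK k x' z).mulVec p)) x
        - (k : ℂ) ^ 2 • (PiK k x z).mulVec p = 0 := by
  intro x hx
  have hk0 : (k : ℂ) ≠ 0 := by exact_mod_cast hk.ne'
  have hP := contDiffAt_PhiK k hx
  have h1 := fun j => contDiffAt_pd j hP
  have hH := helmholtz_PhiK k hx
  -- second derivatives of `u`, read off from `curl u = ∇Φ × p`
  have key : ∀ c a b, pd c (fun y => pd a (fun y => (PiK k y z).mulVec p b) y
        - pd b (fun y => (PiK k y z).mulVec p a) y) x =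
      pd c (pd a fun y => PhiK k y z) x * p b - pd c (pd b fun y => PhiK k y z) x * p a := by
    intro c a b
    rw [pd_congr c hx fun y hy => curl_PiK_mulVec k p a b hy,
      pd_sub c ((h1 a).mul contDiffAt_const) ((h1 b).mul contDiffAt_const),
      pd_mul_const c _ (h1 a), pd_mul_const c _ (h1 b)]
  have hu : ∀ i, (k : ℂ) ^ 2 * (PiK k x z).mulVec p i =
      pd i (pd 0 fun y => PhiK k y z) x * p 0 + pd i (pd 1 fun y => PhiK k y z) x * p 1
      + pd i (pd 2 fun y => PhiK k y z) x * p 2 + (k : ℂ) ^ 2 * PhiK k x z * p i := by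
    intro i
    rw [PiK_mulVec_apply]
    field_simp
  have c01 := pd_comm 0 1 hP
  have c02 := pd_comm 0 2 hP
  have c12 := pd_comm 1 2 hP
  funext i
  rw [Pi.sub_apply, Pi.smul_apply, smul_eq_mul, hu]
  fin_cases i
  · change pd 1 (fun y => pd 0 _ y - pd 1 _ y) x - pd 2 (fun y => pd 2 _ y - pd 0 _ y) x - _ = 0
    rw [key, key]
    simp only [Fin.zero_eta]
    linear_combination -p 0 * hH - p 1 * c01 - p 2 * c02
  · change pd 2 (fun y => pd 1 _ y - pd 2 _ y) x - pd 0 (fun y => pd 0 _ y - pd 1 _ y) x - _ = 0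
    rw [key, key]
    simp only [Fin.mk_one]
    linear_combination -p 1 * hH + p 0 * c01 - p 2 * c12
  · change pd 0 (fun y => pd 2 _ y - pd 0 _ y) x - pd 1 (fun y => pd 1 _ y - pd 2 _ y) x - _ = 0
    rw [key, key]
    simp only [Fin.reduceFinMk]
    linear_combination -p 2 * hH + p 0 * c02 + p 1 * c12
end

section
/- Let k > 0, y ∈ ℝ³ and let x̂ ∈ ℝ³ be a unit vector. Then, entrywise, lim_{r → ∞} 4π r e^{−i k r} Π_k(r x̂, y) = e^{−i k x̂·y} (I₃ − x̂ ⊗ x̂); that is, the far-field pattern of the dyadic Green kernel is Π_k^∞(x̂, y) = (e^{−i k x̂·y}/(4π)) (I₃ − x̂ ⊗ x̂). -/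
/-!
Write `d = x − y`, `R = ‖d‖` and `u = d / R`. Since `Φ_k(·,y)` is a radial function of `d`, the
chain rule gives the exact expression (`PiK_eq`)
`Π_k(x,y) = e^{ikR}/(4πR) · (I − u ⊗ u + k⁻² (ik/R − 1/R²) (I − 3 u ⊗ u))`
away from the diagonal. Along the ray `x = r x̂` one has `R/r → 1` and `u → x̂`, so that the second
term vanishes in the limit, while `R − r = (R² − r²)/(R + r) → −⟪x̂, y⟫` gives the phase factor.
-/

open scoped RealInnerProductSpace

theorem hasFDerivAt_norm_sub {E : Type*} [NormedAddCommGroup E] [InnerProductSpace ℝ E]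
    {x y : E} (h : x ≠ y) :
    HasFDerivAt (fun z : E => ‖z - y‖) (‖x - y‖⁻¹ • innerSL ℝ (x - y)) x := by
  have hne : ‖x - y‖ ≠ 0 := norm_ne_zero_iff.mpr (sub_ne_zero.mpr h)
  have h1 : HasFDerivAt (fun z : E => ‖z - y‖ ^ 2) (2 • innerSL ℝ (x - y)) x := by
    simpa using ((hasFDerivAt_id x).sub_const y).norm_sq
  have h2 := h1.sqrt (pow_ne_zero 2 hne)
  simp only [Real.sqrt_sq (norm_nonneg _)] at h2
  convert h2 using 1
  ext v
  simp
  field_simp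

/-- A radial function `z ↦ f ‖z − y‖` is differentiable off its centre, and its partial derivatives
are `(x − y)ᵢ / ‖x − y‖` times the derivative of `f`. -/
theorem hasFDerivAt_radial {f : ℝ → ℂ} {f' : ℂ} {x y : EuclideanSpace ℝ (Fin 3)} (h : x ≠ y)
    (hf : HasDerivAt f f' ‖x - y‖) :
    ∃ L : EuclideanSpace ℝ (Fin 3) →L[ℝ] ℂ,
      HasFDerivAt (fun z => f ‖z - y‖) L x ∧
        ∀ i, L (EuclideanSpace.single i 1) = (((x - y) i : ℝ) : ℂ) / (‖x - y‖ : ℂ) * f' := by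
  refine ⟨_, hf.hasFDerivAt.comp x (hasFDerivAt_norm_sub h), fun i => ?_⟩
  simp [EuclideanSpace.inner_single_right]
  ring

theorem hasDerivAt_exp_phase (k R : ℝ) :
    HasDerivAt (fun R : ℝ => Complex.exp (Complex.I * k * (R : ℂ)))
      (Complex.exp (Complex.I * k * R) * (Complex.I * k)) R := by
  simpa using ((Complex.ofRealCLM.hasDerivAt (x := R)).const_mul (Complex.I * k)).cexp

theorem fderiv_PhiK (k : ℝ) {x y : EuclideanSpace ℝ (Fin 3)} (h : x ≠ y) (j : Fin 3) :
    fderiv ℝ (fun z => PhiK k z y) x (EuclideanSpace.single j 1) =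
      Complex.exp (Complex.I * k * (‖x - y‖ : ℝ)) * (Complex.I * k * (‖x - y‖ : ℝ) - 1)
        / (4 * Real.pi * (‖x - y‖ : ℂ) ^ 3) * (((x - y) j : ℝ) : ℂ) := by
  have hne : (‖x - y‖ : ℂ) ≠ 0 := by simpa [sub_eq_zero] using h
  have hpi : (Real.pi : ℂ) ≠ 0 := by simp [Real.pi_ne_zero]
  have hR := Complex.ofRealCLM.hasDerivAt (x := ‖x - y‖)
  have hd := (hasDerivAt_exp_phase k ‖x - y‖).div (hR.const_mul (4 * (Real.pi : ℂ)))
    (by simpa [sub_eq_zero] using h)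
  obtain ⟨L, hL, hLi⟩ := hasFDerivAt_radial h hd
  have e : (fun z => PhiK k z y) = fun z => ((fun R : ℝ => Complex.exp (Complex.I * k * (R : ℂ))) /
      fun R : ℝ => 4 * (Real.pi : ℂ) * Complex.ofRealCLM R) ‖z - y‖ := by
    funext z
    simp [PhiK]
  rw [e, hL.fderiv, hLi]
  simp only [Complex.ofRealCLM_apply, Complex.ofReal_one]
  field_simp

/-- The Hessian in terms of `u = (x − y)/‖x − y‖`: besides the leading part `−k² u ⊗ u`, all terms
carry a factor `‖x − y‖⁻¹`. -/
theorem hessPhiK_eq (k : ℝ) {x y : EuclideanSpace ℝ (Fin 3)} (h : x ≠ y) (i j : Fin 3) :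
    hessPhiK k x y i j =
      Complex.exp (Complex.I * k * (‖x - y‖ : ℝ)) / (4 * Real.pi * (‖x - y‖ : ℂ)) *
        (-(k : ℂ) ^ 2 * ((((x - y) i / ‖x - y‖ : ℝ) : ℂ) * (((x - y) j / ‖x - y‖ : ℝ) : ℂ))
          + (Complex.I * k * ((‖x - y‖⁻¹ : ℝ) : ℂ) - ((‖x - y‖⁻¹ : ℝ) : ℂ) ^ 2) *
            ((if i = j then 1 else 0)
              - 3 * ((((x - y) i / ‖x - y‖ : ℝ) : ℂ) * (((x - y) j / ‖x - y‖ : ℝ) : ℂ)))) := by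
  have hne : (‖x - y‖ : ℂ) ≠ 0 := by simpa [sub_eq_zero] using h
  have hpi : (Real.pi : ℂ) ≠ 0 := by simp [Real.pi_ne_zero]
  have hR := Complex.ofRealCLM.hasDerivAt (x := ‖x - y‖)
  have hd := ((hasDerivAt_exp_phase k ‖x - y‖).mul ((hR.const_mul (Complex.I * k)).sub_const 1)).div
    ((hR.pow 3).const_mul (4 * (Real.pi : ℂ)))
    (by simpa [sub_eq_zero] using h)
  obtain ⟨L, hL, hLi⟩ := hasFDerivAt_radial h hd
  have hc : HasFDerivAt (fun z : EuclideanSpace ℝ (Fin 3) => (((z - y) j : ℝ) : ℂ))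
      (Complex.ofRealCLM.comp (EuclideanSpace.proj j)) x :=
    (Complex.ofRealCLM.comp (EuclideanSpace.proj (𝕜 := ℝ) j)).hasFDerivAt.comp x
      ((hasFDerivAt_id x).sub_const y)
  -- The formula for the gradient holds on the open set `x ≠ y`, hence may be differentiated there.
  have e : (fun z => fderiv ℝ (fun z' => PhiK k z' y) z (EuclideanSpace.single j 1)) =ᶠ[nhds x] _ :=
    (isOpen_ne.eventually_mem h).mono fun z hz => fderiv_PhiK k hz j
  have hm := (hL.mul hc).congr_of_eventuallyEq (f₁ := _) (e.trans (.of_eq (by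
    funext z
    simp)))
  rw [hessPhiK, hm.fderiv]
  by_cases hij : i = j
  · subst hij
    simp [hLi]
    field_simp
    ring_nf
    simp only [Complex.I_sq]
    ring
  · simp [hLi, hij, Ne.symm hij]
    field_simp
    ring_nf
    simp only [Complex.I_sq]
    ring

/-- Closed form of the dyadic Green kernel off the diagonal, split into its leading part
`I − u ⊗ u` and a correction that decays faster at infinity. -/
theorem PiK_eq (k : ℝ) (hk : 0 < k) {x y : EuclideanSpace ℝ (Fin 3)} (h : x ≠ y) (i j : Fin 3) :
    PiK k x y i j =
      Complex.exp (Complex.I * k * (‖x - y‖ : ℝ)) / (4 * Real.pi * (‖x - y‖ : ℂ)) *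
        ((if i = j then 1 else 0)
          - (((x - y) i / ‖x - y‖ : ℝ) : ℂ) * (((x - y) j / ‖x - y‖ : ℝ) : ℂ)
          + 1 / (k : ℂ) ^ 2 *
            ((Complex.I * k * ((‖x - y‖⁻¹ : ℝ) : ℂ) - ((‖x - y‖⁻¹ : ℝ) : ℂ) ^ 2) *
            ((if i = j then 1 else 0)
              - 3 * ((((x - y) i / ‖x - y‖ : ℝ) : ℂ) * (((x - y) j / ‖x - y‖ : ℝ) : ℂ))))) := by
  have hk' : (k : ℂ) ≠ 0 := by exact_mod_cast hk.ne'
  have hP : PhiK k x y =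
      Complex.exp (Complex.I * k * (‖x - y‖ : ℝ)) / (4 * Real.pi * (‖x - y‖ : ℂ)) := by
    simp [PhiK]
  rw [PiK, Matrix.of_apply, hessPhiK_eq k h, hP]
  generalize (((x - y) i / ‖x - y‖ : ℝ) : ℂ) = u
  generalize (((x - y) j / ‖x - y‖ : ℝ) : ℂ) = v
  generalize Complex.exp (Complex.I * k * (‖x - y‖ : ℝ)) / (4 * Real.pi * (‖x - y‖ : ℂ)) = E
  generalize (if i = j then (1 : ℂ) else 0) = δ
  field_simp
  ring

section Asymptotics

open Filter Topology

variable {E : Type*} [NormedAddCommGroup E] [InnerProductSpace ℝ E]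

theorem tendsto_norm_ray_div (a y : E) (ha : ‖a‖ = 1) :
    Tendsto (fun r : ℝ => ‖r • a - y‖ / r) atTop (𝓝 1) := by
  have h : Tendsto (fun r : ℝ => ‖a - r⁻¹ • y‖) atTop (𝓝 ‖a - (0 : ℝ) • y‖) :=
    (tendsto_const_nhds.sub (tendsto_inv_atTop_zero.smul_const y)).norm
  rw [zero_smul, sub_zero, ha] at h
  refine h.congr' ?_
  filter_upwards [eventually_gt_atTop 0] with r hr
  have : r • a - y = r • (a - r⁻¹ • y) := by
    rw [smul_sub, smul_inv_smul₀ hr.ne']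
  rw [this, norm_smul, Real.norm_of_nonneg hr.le]
  field_simp

/-- The distance from `y` to the point `r a` of a ray is `r − ⟪a, y⟫ + o(1)`. -/
theorem tendsto_norm_ray_sub (a y : E) (ha : ‖a‖ = 1) :
    Tendsto (fun r : ℝ => ‖r • a - y‖ - r) atTop (𝓝 (-inner ℝ a y)) := by
  have h : Tendsto (fun r : ℝ => (-2 * inner ℝ a y + ‖y‖ ^ 2 * r⁻¹) / (‖r • a - y‖ / r + 1)) atTop
      (𝓝 ((-2 * inner ℝ a y + ‖y‖ ^ 2 * 0) / (1 + 1))) :=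
    (tendsto_const_nhds.add (tendsto_inv_atTop_zero.const_mul _)).div
      ((tendsto_norm_ray_div a y ha).add_const 1) (by norm_num)
  rw [show (-2 * inner ℝ a y + ‖y‖ ^ 2 * 0) / (1 + 1) = -inner ℝ a y by ring] at h
  refine h.congr' ?_
  filter_upwards [eventually_gt_atTop 0] with r hr
  have hsq : ‖r • a - y‖ ^ 2 = r ^ 2 - 2 * r * inner ℝ a y + ‖y‖ ^ 2 := by
    rw [norm_sub_sq_real, norm_smul, real_inner_smul_left, ha, Real.norm_of_nonneg hr.le]
    ring
  have hpos : 0 < ‖r • a - y‖ + r := add_pos_of_nonneg_of_pos (norm_nonneg _) hr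
  have hpos' : ‖r • a - y‖ / r + 1 ≠ 0 := by positivity
  rw [div_eq_iff hpos']
  field_simp
  linear_combination -hsq

end Asymptotics

/-- Entrywise far-field pattern of the dyadic Green kernel: for a unit direction `x̂`,
`lim_{r → ∞} 4π r e^{−ikr} Π_k(r x̂, y) = e^{−ik x̂·y} (I₃ − x̂ ⊗ x̂)`, i.e.
`Π_k^∞(x̂,y) = (e^{−ik x̂·y}/(4π))(I₃ − x̂ ⊗ x̂)`. -/
theorem stmt15 (k : ℝ) (hk : 0 < k) (y xhat : EuclideanSpace ℝ (Fin 3))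
    (hxhat : ‖xhat‖ = 1) :
    ∀ i j : Fin 3,
      Filter.Tendsto
        (fun r : ℝ =>
          4 * (Real.pi : ℂ) * (r : ℂ) * Complex.exp (-(Complex.I * (k : ℂ) * (r : ℂ)))
            * PiK k (r • xhat) y i j)
        Filter.atTop
        (nhds (Complex.exp (-(Complex.I * (k : ℂ) * ((⟪xhat, y⟫ : ℝ) : ℂ)))
          * ((if i = j then 1 else 0) - ((xhat i : ℝ) : ℂ) * ((xhat j : ℝ) : ℂ)))) := by
  intro i j
  have hlin := tendsto_norm_ray_div xhat y hxhat
  have hdiv : Filter.Tendsto (fun r : ℝ => r / ‖r • xhat - y‖) Filter.atTop (nhds 1) := by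
    simpa using hlin.inv₀ one_ne_zero
  have hinv : Filter.Tendsto (fun r : ℝ => ‖r • xhat - y‖⁻¹) Filter.atTop (nhds 0) := by
    have h := hdiv.mul tendsto_inv_atTop_zero
    rw [mul_zero] at h
    refine h.congr' ?_
    filter_upwards [Filter.eventually_gt_atTop 0] with r hr
    field_simp
  have hu : ∀ l : Fin 3, Filter.Tendsto (fun r : ℝ => (r • xhat - y) l / ‖r • xhat - y‖)
      Filter.atTop (nhds (xhat l)) := by
    intro l
    have h := (hdiv.const_mul (xhat l)).sub (hinv.const_mul (y l))
    rw [mul_one, mul_zero, sub_zero] at h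
    refine h.congr fun r => ?_
    simp only [PiLp.sub_apply, PiLp.smul_apply, smul_eq_mul]
    ring
  have hphase : Filter.Tendsto
      (fun r : ℝ => Complex.exp (Complex.I * k * ((‖r • xhat - y‖ - r : ℝ) : ℂ))) Filter.atTop
      (nhds (Complex.exp (Complex.I * k * ((-⟪xhat, y⟫ : ℝ) : ℂ)))) :=
    ((tendsto_norm_ray_sub xhat y hxhat).ofReal.const_mul (Complex.I * (k : ℂ))).cexp
  have hinvC := hinv.ofReal
  have hprod := (hu i).ofReal |>.mul ((hu j).ofReal)
  have hrest := ((hinvC.const_mul (Complex.I * (k : ℂ))).sub (hinvC.pow 2)).mul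
    ((hprod.const_mul 3).const_sub (if i = j then (1 : ℂ) else 0))
  have main := (hphase.mul (hdiv.ofReal)).mul
    ((hprod.const_sub (if i = j then (1 : ℂ) else 0)).add (hrest.const_mul (1 / (k : ℂ) ^ 2)))
  convert main.congr' ?_ using 2
  · simp
  -- For `r > ‖y‖` the point `r x̂` differs from `y`, so the closed form of the kernel applies.
  · filter_upwards [Filter.eventually_gt_atTop ‖y‖] with r hr
    have hne : r • xhat ≠ y := by
      intro h
      have h' := congrArg norm h
      rw [norm_smul, hxhat, mul_one, Real.norm_eq_abs] at h'
      linarith [le_abs_self r]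
    have hR : (‖r • xhat - y‖ : ℂ) ≠ 0 := by simpa [sub_eq_zero] using hne
    have hpi : (Real.pi : ℂ) ≠ 0 := by simp [Real.pi_ne_zero]
    have hexp : Complex.exp (Complex.I * k * ((‖r • xhat - y‖ - r : ℝ) : ℂ)) =
        Complex.exp (-(Complex.I * k * r)) * Complex.exp (Complex.I * k * (‖r • xhat - y‖ : ℝ)) := by
      rw [← Complex.exp_add]
      push_cast
      ring_nf
    rw [PiK_eq k hk hne, hexp]
    refine (congrArg (· * _) ?_).trans (mul_assoc _ _ _)
    rw [Complex.ofReal_div]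
    field_simp
end
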